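/- Let ω_GHZ = |GHZ⟩⟨GHZ| with |GHZ⟩ = (|000⟩+|111⟩)/√2, and let E_λ be the qubit depolarizing channel. The partial transpose of the three-qubit state E_λ^{⊗3}[ω_GHZ] with respect to the splitting of qubit 1 versus qubits 2,3 has the eigenvalue μ₋ = (1/2)((1−λ²)/4 − λ³), which is negative whenever (1−λ²)/4 < λ³; in particular μ₋ < 0 for λ = 1/√3, so E_{1/√3}^{⊗3}[ω_GHZ] is entangled across the 1|23 cut and hence not fully separable. Consequently the depolarizing channel E_{1/√3} is 2-locally entanglement-annihilating but not 3-locally entanglement-annihilating, i.e., T_{3-LEA} is a strict subset of T_{2-LEA}. -/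

import Mathlib

open Matrix
open scoped Kronecker ComplexOrder

/-- A quantum state: a positive semidefinite matrix of unit trace. -/
def IsState {ι : Type} [Fintype ι] (ρ : Matrix ι ι ℂ) : Prop :=
  ρ.PosSemidef ∧ ρ.trace = 1

/-- Separability of a bipartite state across the `ιA | ιB` cut: a finite convex
combination of Kronecker products of states. -/
def IsSep {ιA ιB : Type} [Fintype ιA] [Fintype ιB]
    (ω : Matrix (ιA × ιB) (ιA × ιB) ℂ) : Prop :=
  ∃ (m : ℕ) (p : Fin m → ℝ) (ξ : Fin m → Matrix ιA ιA ℂ) (ζ : Fin m → Matrix ιB ιB ℂ),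
    (∀ j, 0 ≤ p j) ∧ ((∑ j, p j) = 1) ∧ (∀ j, IsState (ξ j)) ∧ (∀ j, IsState (ζ j)) ∧
    ω = ∑ j, (p j : ℂ) • (ξ j ⊗ₖ ζ j)

/-- The extension `E ⊗ id` of a map `E` by a trivial action on an `n`-dimensional ancilla. -/
def tensorId {ι : Type} (E : Matrix ι ι ℂ → Matrix ι ι ℂ) (n : ℕ)
    (X : Matrix (ι × Fin n) (ι × Fin n) ℂ) : Matrix (ι × Fin n) (ι × Fin n) ℂ :=
  Matrix.of fun p q => E (Matrix.of fun a c => X (a, p.2) (c, q.2)) p.1 q.1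

/-- A quantum channel: a linear, trace-preserving, completely positive map. -/
def IsChannel {ι : Type} [Fintype ι] (E : Matrix ι ι ℂ → Matrix ι ι ℂ) : Prop :=
  (∀ (c : ℂ) (X Y : Matrix ι ι ℂ), E (c • X + Y) = c • E X + E Y) ∧
  (∀ X, (E X).trace = X.trace) ∧
  (∀ (n : ℕ) (X : Matrix (ι × Fin n) (ι × Fin n) ℂ), X.PosSemidef → (tensorId E n X).PosSemidef)

/-- Entanglement-breaking channel: `E ⊗ id` maps every state to a separable state,
for every ancilla dimension `n ≥ 1`. -/
def IsEB {ι : Type} [Fintype ι] (E : Matrix ι ι ℂ → Matrix ι ι ℂ) : Prop :=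
  ∀ (n : ℕ), 0 < n → ∀ ω : Matrix (ι × Fin n) (ι × Fin n) ℂ,
    IsState ω → IsSep (tensorId E n ω)

/-- Entanglement-annihilating channel on a bipartite system: every state is mapped
to a separable state. -/
def IsEA {ιA ιB : Type} [Fintype ιA] [Fintype ιB]
    (E : Matrix (ιA × ιB) (ιA × ιB) ℂ → Matrix (ιA × ιB) (ιA × ιB) ℂ) : Prop :=
  ∀ ω : Matrix (ιA × ιB) (ιA × ιB) ℂ, IsState ω → IsSep (E ω)

/-- The map `F ⊗ id` acting as `F` on the first factor of a bipartite system. -/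
def rTensor {ιA ιB : Type} (F : Matrix ιA ιA ℂ → Matrix ιA ιA ℂ)
    (X : Matrix (ιA × ιB) (ιA × ιB) ℂ) : Matrix (ιA × ιB) (ιA × ιB) ℂ :=
  Matrix.of fun p q => F (Matrix.of fun a c => X (a, p.2) (c, q.2)) p.1 q.1

/-- The map `id ⊗ F` acting as `F` on the second factor of a bipartite system. -/
def lTensor {ιA ιB : Type} (F : Matrix ιB ιB ℂ → Matrix ιB ιB ℂ)
    (X : Matrix (ιA × ιB) (ιA × ιB) ℂ) : Matrix (ιA × ιB) (ιA × ιB) ℂ :=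
  Matrix.of fun p q => F (Matrix.of fun b d => X (p.1, b) (q.1, d)) p.2 q.2

/-- The local map `E ⊗ F` on a bipartite system (for linear `E`, `F` this is the
usual tensor product map `(id ⊗ F) ∘ (E ⊗ id)`). -/
def tensorMap {ιA ιB : Type} (E : Matrix ιA ιA ℂ → Matrix ιA ιA ℂ)
    (F : Matrix ιB ιB ℂ → Matrix ιB ιB ℂ)
    (X : Matrix (ιA × ιB) (ιA × ιB) ℂ) : Matrix (ιA × ιB) (ιA × ιB) ℂ :=
  lTensor F (rTensor E X)

/-- `k`-fold Kronecker product of single-particle matrices. -/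
def kronPow {d k : ℕ} (ρ : Fin k → Matrix (Fin d) (Fin d) ℂ) :
    Matrix (Fin k → Fin d) (Fin k → Fin d) ℂ :=
  Matrix.of fun i j => ∏ t, ρ t (i t) (j t)

/-- Full separability of a `k`-partite state: a finite convex combination of
`k`-fold Kronecker products of single-particle states. -/
def IsFullySep {d k : ℕ} (ω : Matrix (Fin k → Fin d) (Fin k → Fin d) ℂ) : Prop :=
  ∃ (m : ℕ) (p : Fin m → ℝ) (ρ : Fin m → Fin k → Matrix (Fin d) (Fin d) ℂ),
    (∀ j, 0 ≤ p j) ∧ ((∑ j, p j) = 1) ∧ (∀ j t, IsState (ρ j t)) ∧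
    ω = ∑ j, (p j : ℂ) • kronPow (ρ j)

/-- The map applying `E` to the `t`-th particle of a `k`-partite system. -/
def applyAt {d k : ℕ} (E : Matrix (Fin d) (Fin d) ℂ → Matrix (Fin d) (Fin d) ℂ) (t : Fin k)
    (X : Matrix (Fin k → Fin d) (Fin k → Fin d) ℂ) :
    Matrix (Fin k → Fin d) (Fin k → Fin d) ℂ :=
  Matrix.of fun i j =>
    E (Matrix.of fun a b => X (Function.update i t a) (Function.update j t b)) (i t) (j t)

/-- The `k`-fold tensor power `E ⊗ ⋯ ⊗ E` of a single-particle map `E`,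
obtained by applying `E` to each of the `k` particles. -/
def tensorPow {d : ℕ} (E : Matrix (Fin d) (Fin d) ℂ → Matrix (Fin d) (Fin d) ℂ) (k : ℕ)
    (X : Matrix (Fin k → Fin d) (Fin k → Fin d) ℂ) :
    Matrix (Fin k → Fin d) (Fin k → Fin d) ℂ :=
  (List.finRange k).foldr (applyAt E) X

/-- The qubit depolarizing channel `E_λ[X] = λ X + (1-λ) tr(X) I/2`. -/
noncomputable def depol (lam : ℝ) (X : Matrix (Fin 2) (Fin 2) ℂ) : Matrix (Fin 2) (Fin 2) ℂ :=
  (lam : ℂ) • X + ((1 - lam : ℝ) : ℂ) • X.trace • ((2 : ℂ)⁻¹ • (1 : Matrix (Fin 2) (Fin 2) ℂ))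

/-- The maximally entangled two-qubit vector `(|00⟩ + |11⟩)/√2`. -/
noncomputable def psiPlus : (Fin 2 × Fin 2) → ℂ :=
  fun p => if p.1 = p.2 then ((Real.sqrt 2 : ℝ) : ℂ)⁻¹ else 0

/-- The projection onto the maximally entangled two-qubit vector. -/
noncomputable def Pplus : Matrix (Fin 2 × Fin 2) (Fin 2 × Fin 2) ℂ :=
  Matrix.vecMulVec psiPlus (star psiPlus)

/-- Partial transposition on the second qubit of a two-qubit matrix. -/
def ptB (X : Matrix (Fin 2 × Fin 2) (Fin 2 × Fin 2) ℂ) :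
    Matrix (Fin 2 × Fin 2) (Fin 2 × Fin 2) ℂ :=
  Matrix.of fun p q => X (p.1, q.2) (q.1, p.2)

/-- Partial transposition on the first factor (qubit 1 versus qubits 2,3). -/
def pt1 (X : Matrix (Fin 2 × Fin 2 × Fin 2) (Fin 2 × Fin 2 × Fin 2) ℂ) :
    Matrix (Fin 2 × Fin 2 × Fin 2) (Fin 2 × Fin 2 × Fin 2) ℂ :=
  Matrix.of fun p q => X (q.1, p.2) (p.1, q.2)

/-- The three-qubit GHZ vector `(|000⟩ + |111⟩)/√2`. -/
noncomputable def ghzVec : (Fin 2 × Fin 2 × Fin 2) → ℂ :=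
  fun p => if p.1 = p.2.1 ∧ p.2.1 = p.2.2 then ((Real.sqrt 2 : ℝ) : ℂ)⁻¹ else 0

/-- The three-qubit GHZ state `|GHZ⟩⟨GHZ|`. -/
noncomputable def ghzState : Matrix (Fin 2 × Fin 2 × Fin 2) (Fin 2 × Fin 2 × Fin 2) ℂ :=
  Matrix.vecMulVec ghzVec (star ghzVec)


/-- Full separability of a three-qubit state: a finite convex combination of
threefold Kronecker products of single-qubit states. -/
def IsFullySep3 (ω : Matrix (Fin 2 × Fin 2 × Fin 2) (Fin 2 × Fin 2 × Fin 2) ℂ) : Prop :=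
  ∃ (m : ℕ) (p : Fin m → ℝ) (a b c : Fin m → Matrix (Fin 2) (Fin 2) ℂ),
    (∀ j, 0 ≤ p j) ∧ ((∑ j, p j) = 1) ∧
    (∀ j, IsState (a j) ∧ IsState (b j) ∧ IsState (c j)) ∧
    ω = ∑ j, (p j : ℂ) • (a j ⊗ₖ (b j ⊗ₖ c j))

/-- A single-qubit channel is 2-locally entanglement-annihilating if `E ⊗ E` maps
every two-qubit state to a separable state. -/
def Is2LEA (E : Matrix (Fin 2) (Fin 2) ℂ → Matrix (Fin 2) (Fin 2) ℂ) : Prop :=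
  ∀ ω : Matrix (Fin 2 × Fin 2) (Fin 2 × Fin 2) ℂ, IsState ω →
    IsSep (tensorMap E E ω)

/-- A single-qubit channel is 3-locally entanglement-annihilating if `E ⊗ E ⊗ E` maps
every three-qubit state to a fully separable state. -/
def Is3LEA (E : Matrix (Fin 2) (Fin 2) ℂ → Matrix (Fin 2) (Fin 2) ℂ) : Prop :=
  ∀ ω : Matrix (Fin 2 × Fin 2 × Fin 2) (Fin 2 × Fin 2 × Fin 2) ℂ, IsState ω →
    IsFullySep3 (tensorMap E (tensorMap E E) ω)

/-!
The partial transpose of the depolarized GHZ state has `|100⟩ - |011⟩` as an eigenvector with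
eigenvalue `μ₋`, so a negative `μ₋` excludes separability by the Peres criterion.

By the Schmidt decomposition and unitary covariance, `E_λ ⊗ E_λ` annihilates all two-qubit
entanglement as soon as it does so for the vectors `∑ i, σ i |ii⟩`. There the output is `λ ^ 2`
times a phase average of product states plus a diagonal matrix, whose entries are nonnegative when
`-1 / 3 ≤ λ` and `λ ^ 2 ≤ 1 / 3`.

A 3-LEA channel is 2-LEA because one may append a third qubit in a fixed state and trace it out
after the channel has acted.
-/

section Linearity

variable {ιA ιB ιC : Type}

lemma eq_of_eq_on_kronecker [Finite ιA] [Finite ιB] {M : Type*} [AddCommMonoid M] [Module ℂ M]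
    {f g : Matrix (ιA × ιB) (ιA × ιB) ℂ → M} (hf : IsLinearMap ℂ f) (hg : IsLinearMap ℂ g)
    (h : ∀ (A : Matrix ιA ιA ℂ) (B : Matrix ιB ιB ℂ), f (A ⊗ₖ B) = g (A ⊗ₖ B))
    (X : Matrix (ιA × ιB) (ιA × ιB) ℂ) : f X = g X := by
  classical
  induction X using Matrix.induction_on' with
  | h_zero => rw [hf.map_zero, hg.map_zero]
  | h_add X Y hX hY => rw [hf.map_add, hg.map_add, hX, hY]
  | h_std_basis p q x =>
    have hpq := h (single p.1 q.1 x) (single p.2 q.2 1)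
    rwa [single_kronecker_single, mul_one] at hpq

variable {E : Matrix ιA ιA ℂ → Matrix ιA ιA ℂ} {F : Matrix ιB ιB ℂ → Matrix ιB ιB ℂ}

lemma isLinearMap_rTensor (hE : IsLinearMap ℂ E) :
    IsLinearMap ℂ (rTensor E : Matrix (ιA × ιB) (ιA × ιB) ℂ → _) where
  map_add X Y := by
    ext p q
    exact congr_fun₂ (hE.map_add (of fun a c => X (a, p.2) (c, q.2))
      (of fun a c => Y (a, p.2) (c, q.2))) p.1 q.1
  map_smul c X := by
    ext p q
    exact congr_fun₂ (hE.map_smul c (of fun a d => X (a, p.2) (d, q.2))) p.1 q.1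

lemma isLinearMap_lTensor (hF : IsLinearMap ℂ F) :
    IsLinearMap ℂ (lTensor F : Matrix (ιA × ιB) (ιA × ιB) ℂ → _) where
  map_add X Y := by
    ext p q
    exact congr_fun₂ (hF.map_add (of fun b d => X (p.1, b) (q.1, d))
      (of fun b d => Y (p.1, b) (q.1, d))) p.2 q.2
  map_smul c X := by
    ext p q
    exact congr_fun₂ (hF.map_smul c (of fun b d => X (p.1, b) (q.1, d))) p.2 q.2

lemma isLinearMap_tensorMap (hE : IsLinearMap ℂ E) (hF : IsLinearMap ℂ F) :
    IsLinearMap ℂ (tensorMap E F) :=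
  ((isLinearMap_lTensor hF).mk'.comp (isLinearMap_rTensor hE).mk').isLinear

lemma rTensor_kronecker (hE : IsLinearMap ℂ E) (A : Matrix ιA ιA ℂ) (B : Matrix ιB ιB ℂ) :
    rTensor E (A ⊗ₖ B) = E A ⊗ₖ B := by
  ext p q
  have hslice : (of fun a c => (A ⊗ₖ B) (a, p.2) (c, q.2)) = B p.2 q.2 • A := by
    ext a c
    simp [mul_comm]
  simp only [rTensor, of_apply]
  rw [hslice, hE.map_smul, Matrix.smul_apply, smul_eq_mul, mul_comm, kroneckerMap_apply]

lemma lTensor_kronecker (hF : IsLinearMap ℂ F) (A : Matrix ιA ιA ℂ) (B : Matrix ιB ιB ℂ) :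
    lTensor F (A ⊗ₖ B) = A ⊗ₖ F B := by
  ext p q
  have hslice : (of fun b d => (A ⊗ₖ B) (p.1, b) (q.1, d)) = A p.1 q.1 • B := by
    ext b d
    simp
  simp only [lTensor, of_apply]
  rw [hslice, hF.map_smul, Matrix.smul_apply, smul_eq_mul, kroneckerMap_apply]

lemma tensorMap_kronecker (hE : IsLinearMap ℂ E) (hF : IsLinearMap ℂ F)
    (A : Matrix ιA ιA ℂ) (B : Matrix ιB ιB ℂ) : tensorMap E F (A ⊗ₖ B) = E A ⊗ₖ F B := by
  rw [tensorMap, rTensor_kronecker hE, lTensor_kronecker hF]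

lemma isLinearMap_mul_mul {m n : Type*} [Fintype m] (A : Matrix n m ℂ) (B : Matrix m n ℂ) :
    IsLinearMap ℂ fun X : Matrix m m ℂ => A * X * B where
  map_add X Y := by rw [Matrix.mul_add, Matrix.add_mul]
  map_smul c X := by rw [Matrix.mul_smul, Matrix.smul_mul]

lemma tensorMap_reindex_prodAssoc (E : Matrix ιA ιA ℂ → Matrix ιA ιA ℂ)
    (F : Matrix ιB ιB ℂ → Matrix ιB ιB ℂ) (G : Matrix ιC ιC ℂ → Matrix ιC ιC ℂ)
    (X : Matrix ((ιA × ιB) × ιC) ((ιA × ιB) × ιC) ℂ) :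
    tensorMap E (tensorMap F G) (reindex (.prodAssoc ιA ιB ιC) (.prodAssoc ιA ιB ιC) X) =
      reindex (.prodAssoc ιA ιB ιC) (.prodAssoc ιA ιB ιC) (tensorMap (tensorMap E F) G X) :=
  rfl

variable [Fintype ιB]

/-- The partial trace over the second factor. -/
def traceRight (X : Matrix (ιA × ιB) (ιA × ιB) ℂ) : Matrix ιA ιA ℂ :=
  of fun i j => ∑ k, X (i, k) (j, k)

lemma isLinearMap_traceRight :
    IsLinearMap ℂ (traceRight : Matrix (ιA × ιB) (ιA × ιB) ℂ → Matrix ιA ιA ℂ) where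
  map_add X Y := by
    ext i j
    simp [traceRight, Finset.sum_add_distrib]
  map_smul c X := by
    ext i j
    simp [traceRight, Finset.mul_sum]

lemma traceRight_kronecker (A : Matrix ιA ιA ℂ) (B : Matrix ιB ιB ℂ) :
    traceRight (A ⊗ₖ B) = B.trace • A := by
  ext i j
  simp [traceRight, trace, ← Finset.mul_sum, mul_comm]

variable [Fintype ιA]

lemma trace_tensorMap (hE : IsLinearMap ℂ E) (hF : IsLinearMap ℂ F)
    (hEtr : ∀ A, (E A).trace = A.trace) (hFtr : ∀ B, (F B).trace = B.trace)
    (X : Matrix (ιA × ιB) (ιA × ιB) ℂ) : (tensorMap E F X).trace = X.trace :=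
  eq_of_eq_on_kronecker
    ((traceLinearMap (ιA × ιB) ℂ ℂ).comp (isLinearMap_tensorMap hE hF).mk').isLinear
    (traceLinearMap (ιA × ιB) ℂ ℂ).isLinear
    (fun A B => by simp [tensorMap_kronecker hE hF, trace_kronecker, hEtr, hFtr]) X

lemma tensorMap_conj_kronecker (hE : IsLinearMap ℂ E) (hF : IsLinearMap ℂ F)
    {U : Matrix ιA ιA ℂ} {V : Matrix ιB ιB ℂ} (hU : ∀ A, E (U * A * Uᴴ) = U * E A * Uᴴ)
    (hV : ∀ B, F (V * B * Vᴴ) = V * F B * Vᴴ) (X : Matrix (ιA × ιB) (ιA × ιB) ℂ) :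
    tensorMap E F ((U ⊗ₖ V) * X * (U ⊗ₖ V)ᴴ) = (U ⊗ₖ V) * tensorMap E F X * (U ⊗ₖ V)ᴴ := by
  have hT := isLinearMap_tensorMap hE hF
  have hC := isLinearMap_mul_mul (U ⊗ₖ V) (U ⊗ₖ V)ᴴ
  refine eq_of_eq_on_kronecker (hT.mk'.comp hC.mk').isLinear (hC.mk'.comp hT.mk').isLinear
    (fun A B => ?_) X
  simp [conjTranspose_kronecker, ← mul_kronecker_mul, tensorMap_kronecker hE hF, hU, hV]

end Linearity

section SingularValues

variable {n : Type*} [Fintype n] [DecidableEq n]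

lemma exists_unitary_mul_diagonal {N : Matrix n n ℂ} {d : n → ℂ} (hN : Nᴴ * N = diagonal d) :
    ∃ U ∈ unitaryGroup n ℂ, ∃ σ : n → ℝ, 0 ≤ σ ∧ N = U * diagonal fun i => (σ i : ℂ) := by
  let v : n → EuclideanSpace ℂ n := fun j => WithLp.toLp 2 (N.col j)
  have hinner (i j : n) : inner ℂ (v i) (v j) = diagonal d i j := by
    rw [← hN, EuclideanSpace.inner_eq_star_dotProduct, mul_apply]
    simp [v, dotProduct, mul_comm]
  let s : Set n := {j | v j ≠ 0}
  let w : n → EuclideanSpace ℂ n := fun j => (‖v j‖⁻¹ : ℂ) • v j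
  have hw : Orthonormal ℂ (s.domRestrict w) := by
    refine ⟨fun j => norm_smul_inv_norm j.2, fun i j hij => ?_⟩
    simp [w, Set.domRestrict, inner_smul_left, inner_smul_right, hinner, Subtype.coe_ne_coe.mpr hij]
  obtain ⟨b, hb⟩ := hw.exists_orthonormalBasis_extension_of_card_eq (by simp)
  refine ⟨(EuclideanSpace.basisFun n ℂ).toBasis.toMatrix b,
    (EuclideanSpace.basisFun n ℂ).toMatrix_orthonormalBasis_mem_unitary b,
    fun j => ‖v j‖, fun j => norm_nonneg _, ?_⟩
  ext i j
  have hcol : (‖v j‖ : ℂ) • b j = v j := by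
    by_cases hj : v j = 0
    · simp [hj]
    · rw [hb j hj, smul_smul, mul_inv_cancel₀ (by simpa using hj), one_smul]
  simpa [v, mul_diagonal, Module.Basis.toMatrix_apply, mul_comm] using
    (congrArg (fun x : EuclideanSpace ℂ n => x i) hcol).symm

lemma exists_unitary_mul_diagonal_mul_unitary (M : Matrix n n ℂ) :
    ∃ U ∈ unitaryGroup n ℂ, ∃ V ∈ unitaryGroup n ℂ, ∃ σ : n → ℝ, 0 ≤ σ ∧
      M = U * diagonal (fun i => (σ i : ℂ)) * V := by
  have hM : (Mᴴ * M).IsHermitian := isHermitian_conjTranspose_mul_self M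
  let W := hM.eigenvectorUnitary
  have hdiag : (M * W.1)ᴴ * (M * W.1) = diagonal fun i => (hM.eigenvalues i : ℂ) := by
    have h := hM.conjStarAlgAut_star_eigenvectorUnitary
    rw [Unitary.conjStarAlgAut_star_apply] at h
    rw [conjTranspose_mul, Matrix.mul_assoc, ← Matrix.mul_assoc Mᴴ, ← Matrix.mul_assoc]
    exact h
  obtain ⟨U, hU, σ, hσ, hMW⟩ := exists_unitary_mul_diagonal hdiag
  refine ⟨U, hU, star W.1, (star W).2, σ, hσ, ?_⟩
  rw [← hMW, Matrix.mul_assoc, mem_unitaryGroup_iff.mp W.2, Matrix.mul_one]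

/-- The vector `∑ i, σ i |ii⟩` with Schmidt coefficients `σ` in the standard basis. -/
def schmidtVec (σ : n → ℝ) : n × n → ℂ :=
  fun p => if p.1 = p.2 then σ p.1 else 0

/-- The rank-one matrix `|ψ⟩⟨ψ|` for `ψ = schmidtVec σ`, with trace `∑ i, σ i ^ 2`. -/
def schmidtProj (σ : n → ℝ) : Matrix (n × n) (n × n) ℂ :=
  vecMulVec (schmidtVec σ) (star (schmidtVec σ))

lemma exists_schmidt_decomposition (ψ : n × n → ℂ) :
    ∃ U ∈ unitaryGroup n ℂ, ∃ V ∈ unitaryGroup n ℂ, ∃ σ : n → ℝ, 0 ≤ σ ∧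
      ψ = (U ⊗ₖ V) *ᵥ schmidtVec σ := by
  obtain ⟨U, hU, V, hV, σ, hσ, hψ⟩ := exists_unitary_mul_diagonal_mul_unitary (of ψ.curry)
  refine ⟨U, hU, Vᵀ, transpose_mem_unitaryGroup_iff.mpr hV, σ, hσ, ?_⟩
  ext ⟨i, j⟩
  calc ψ (i, j) = (U * diagonal (fun i => (σ i : ℂ)) * V) i j := congrFun₂ hψ i j
    _ = ∑ k, U i k * V k j * σ k := by
      rw [mul_apply]
      simp only [mul_diagonal, mul_right_comm]
    _ = ((U ⊗ₖ Vᵀ) *ᵥ schmidtVec σ) (i, j) := by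
      simp [mulVec, dotProduct, Fintype.sum_prod_type, schmidtVec]

end SingularValues

section States

lemma posSemidef_single_self {κ : Type*} [DecidableEq κ] (i : κ) :
    (single i i (1 : ℂ)).PosSemidef := by
  rw [← diagonal_single]
  exact .diagonal (Pi.single_nonneg.mpr zero_le_one)

variable {ι κ : Type} [Fintype ι] [Fintype κ]

lemma exists_eq_smul_isState {ρ : Matrix ι ι ℂ} (hρ : ρ.PosSemidef) (h0 : ρ ≠ 0) :
    ∃ c : ℝ, 0 ≤ c ∧ ∃ ξ, IsState ξ ∧ ρ = c • ξ := by
  obtain ⟨hre, him⟩ := Complex.nonneg_iff.mp hρ.trace_nonneg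
  have htr : ρ.trace = (ρ.trace.re : ℂ) := Complex.ext rfl him.symm
  have hne : ρ.trace.re ≠ 0 := fun h => h0 (hρ.trace_eq_zero_iff.mp (by rw [htr, h]; rfl))
  refine ⟨ρ.trace.re, hre, ρ.trace.re⁻¹ • ρ, ⟨hρ.smul (inv_nonneg.mpr hre), ?_⟩, ?_⟩
  · rw [trace_smul, htr]
    simp [hne]
  · rw [smul_inv_smul₀ hne]

lemma isState_kronecker {ξ : Matrix ι ι ℂ} {ζ : Matrix κ κ ℂ} (hξ : IsState ξ) (hζ : IsState ζ) :
    IsState (ξ ⊗ₖ ζ) :=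
  ⟨hξ.1.kronecker hζ.1, by rw [trace_kronecker, hξ.2, hζ.2, one_mul]⟩

lemma isState_reindex (e : ι ≃ κ) {ρ : Matrix ι ι ℂ} (hρ : IsState ρ) :
    IsState (reindex e e ρ) :=
  ⟨hρ.1.submatrix e.symm, (e.symm.sum_comp fun i => ρ i i).trans hρ.2⟩

end States

section SeparableCone

variable {ιA ιB : Type} [Fintype ιA] [Fintype ιB]

variable (ιA ιB) in
/-- The cone of separable matrices with no normalization of the trace. -/
noncomputable def sepCone : PointedCone ℝ (Matrix (ιA × ιB) (ιA × ιB) ℂ) :=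
  PointedCone.hull ℝ {X | ∃ ξ ζ, IsState ξ ∧ IsState ζ ∧ X = ξ ⊗ₖ ζ}

lemma kronecker_mem_sepCone {A : Matrix ιA ιA ℂ} {B : Matrix ιB ιB ℂ} (hA : A.PosSemidef)
    (hB : B.PosSemidef) : A ⊗ₖ B ∈ sepCone ιA ιB := by
  rcases eq_or_ne A 0 with rfl | hA0
  · simp
  rcases eq_or_ne B 0 with rfl | hB0
  · simp
  obtain ⟨a, ha, ξ, hξ, rfl⟩ := exists_eq_smul_isState hA hA0
  obtain ⟨b, hb, ζ, hζ, rfl⟩ := exists_eq_smul_isState hB hB0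
  rw [smul_kronecker, kronecker_smul]
  exact (sepCone ιA ιB).smul_mem ha
    ((sepCone ιA ιB).smul_mem hb (Submodule.subset_span ⟨ξ, ζ, hξ, hζ, rfl⟩))

lemma isSep_of_mem_sepCone {X : Matrix (ιA × ιB) (ιA × ιB) ℂ} (hX : X ∈ sepCone ιA ιB)
    (htr : X.trace = 1) : IsSep X := by
  obtain ⟨m, p, Y, rfl⟩ := Submodule.mem_span_set'.mp hX
  choose ξ ζ hξ hζ hY using fun j => (Y j).2
  refine ⟨m, fun j => p j, ξ, ζ, fun j => (p j).2, ?_, hξ, hζ, ?_⟩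
  · have hsum : ∑ j, ((p j : ℝ) : ℂ) = 1 := by
      rw [← htr, trace_sum]
      refine Finset.sum_congr rfl fun j _ => ?_
      rw [hY, trace_smul, trace_kronecker, (hξ j).2, (hζ j).2, mul_one]
      exact (mul_one _).symm
    exact_mod_cast hsum
  · refine Finset.sum_congr rfl fun j _ => ?_
    rw [hY, Complex.coe_smul]
    rfl

lemma conj_mem_sepCone (U : Matrix ιA ιA ℂ) (V : Matrix ιB ιB ℂ)
    {X : Matrix (ιA × ιB) (ιA × ιB) ℂ} (hX : X ∈ sepCone ιA ιB) :
    (U ⊗ₖ V) * X * (U ⊗ₖ V)ᴴ ∈ sepCone ιA ιB := by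
  induction hX using Submodule.span_induction with
  | mem X hX =>
    obtain ⟨ξ, ζ, hξ, hζ, rfl⟩ := hX
    rw [conjTranspose_kronecker, ← mul_kronecker_mul, ← mul_kronecker_mul]
    exact kronecker_mem_sepCone (hξ.1.mul_mul_conjTranspose_same U)
      (hζ.1.mul_mul_conjTranspose_same V)
  | zero => simp
  | add X Y _ _ hX hY =>
    rw [Matrix.mul_add, Matrix.add_mul]
    exact add_mem hX hY
  | smul c X _ hX =>
    rw [Matrix.mul_smul, Matrix.smul_mul]
    exact (sepCone ιA ιB).smul_mem c.2 hX

lemma diagonal_mem_sepCone [DecidableEq ιA] [DecidableEq ιB] {d : ιA × ιB → ℝ} (hd : 0 ≤ d) :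
    diagonal (fun p => (d p : ℂ)) ∈ sepCone ιA ιB := by
  have hdiag : diagonal (fun p => (d p : ℂ)) =
      ∑ p, d p • (single p.1 p.1 (1 : ℂ) ⊗ₖ single p.2 p.2 (1 : ℂ)) := by
    simp [single_kronecker_single, smul_single, sum_single_eq_diagonal]
  rw [hdiag]
  exact sum_mem fun p _ => (sepCone ιA ιB).smul_mem (hd p)
    (kronecker_mem_sepCone (posSemidef_single_self p.1) (posSemidef_single_self p.2))

end SeparableCone

section LocalMaps

lemma vecMulVec_mulVec_star {m n : Type*} [Fintype n] (A : Matrix m n ℂ) (φ : n → ℂ) :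
    vecMulVec (A *ᵥ φ) (star (A *ᵥ φ)) = A * vecMulVec φ (star φ) * Aᴴ := by
  rw [mul_vecMulVec, vecMulVec_mul, star_mulVec]

lemma schmidtProj_eq_sum {n : Type*} [Fintype n] [DecidableEq n] (σ : n → ℝ) :
    schmidtProj σ =
      ∑ k, ∑ l, (σ k * σ l : ℂ) • (single k l (1 : ℂ) ⊗ₖ single k l (1 : ℂ)) := by
  ext ⟨a, b⟩ ⟨c, d⟩
  by_cases hab : a = b <;> by_cases hcd : c = d <;>
    simp [schmidtProj, vecMulVec_apply, schmidtVec, Matrix.sum_apply, single_apply, hab, hcd,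
      ite_and]
  all_goals grind

variable {n : Type} [Fintype n] [DecidableEq n] {E : Matrix n n ℂ → Matrix n n ℂ}

lemma tensorMap_schmidtProj (hE : IsLinearMap ℂ E) (σ : n → ℝ) :
    tensorMap E E (schmidtProj σ) =
      ∑ k, ∑ l, (σ k * σ l : ℂ) • (E (single k l 1) ⊗ₖ E (single k l 1)) := by
  have hEE := isLinearMap_tensorMap hE hE
  rw [schmidtProj_eq_sum, ← hEE.mk'_apply]
  simp only [map_sum, map_smul]
  simp only [hEE.mk'_apply, tensorMap_kronecker hE hE]

lemma tensorMap_mem_sepCone_of_covariant (hE : IsLinearMap ℂ E)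
    (hcov : ∀ U ∈ unitaryGroup n ℂ, ∀ X, E (U * X * Uᴴ) = U * E X * Uᴴ)
    (hschmidt : ∀ σ : n → ℝ, 0 ≤ σ → tensorMap E E (schmidtProj σ) ∈ sepCone n n)
    {ω : Matrix (n × n) (n × n) ℂ} (hω : ω.PosSemidef) : tensorMap E E ω ∈ sepCone n n := by
  obtain ⟨m, ψ, rfl⟩ := posSemidef_iff_eq_sum_vecMulVec.mp hω
  rw [← (isLinearMap_tensorMap hE hE).mk'_apply, map_sum]
  refine sum_mem fun i _ => ?_
  obtain ⟨U, hU, V, hV, σ, hσ, hψ⟩ := exists_schmidt_decomposition (ψ i)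
  rw [IsLinearMap.mk'_apply, hψ, vecMulVec_mulVec_star, ← schmidtProj,
    tensorMap_conj_kronecker hE hE (hcov U hU) (hcov V hV)]
  exact conj_mem_sepCone U V (hschmidt σ hσ)

lemma isEA_tensorMap_of_covariant (hE : IsLinearMap ℂ E) (htr : ∀ X, (E X).trace = X.trace)
    (hcov : ∀ U ∈ unitaryGroup n ℂ, ∀ X, E (U * X * Uᴴ) = U * E X * Uᴴ)
    (hschmidt : ∀ σ : n → ℝ, 0 ≤ σ → tensorMap E E (schmidtProj σ) ∈ sepCone n n) :
    IsEA (tensorMap E E) := fun ω hω =>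
  isSep_of_mem_sepCone (tensorMap_mem_sepCone_of_covariant hE hcov hschmidt hω.1)
    ((trace_tensorMap hE hE htr htr ω).trans hω.2)

end LocalMaps

section Depolarizing

variable (lam : ℝ)

lemma isLinearMap_depol : IsLinearMap ℂ (depol lam) where
  map_add X Y := by
    simp only [depol, trace_add, smul_add, add_smul]
    abel
  map_smul c X := by
    simp only [depol, trace_smul, smul_add, smul_assoc, smul_comm c]

lemma trace_depol (X : Matrix (Fin 2) (Fin 2) ℂ) : (depol lam X).trace = X.trace := by
  simp only [depol, trace_add, trace_smul, trace_one, Fintype.card_fin, smul_eq_mul]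
  push_cast
  ring

lemma depol_conj_unitary {U : Matrix (Fin 2) (Fin 2) ℂ} (hU : U ∈ unitaryGroup (Fin 2) ℂ)
    (X : Matrix (Fin 2) (Fin 2) ℂ) : depol lam (U * X * Uᴴ) = U * depol lam X * Uᴴ := by
  have htr : (U * X * Uᴴ).trace = X.trace := by
    rw [trace_mul_cycle, ← star_eq_conjTranspose, mem_unitaryGroup_iff'.mp hU, Matrix.one_mul]
  have hone : U * Uᴴ = 1 := mem_unitaryGroup_iff.mp hU
  simp only [depol, htr, Matrix.mul_add, Matrix.add_mul, Matrix.mul_smul, Matrix.smul_mul,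
    Matrix.mul_one, hone]

lemma depol_single (k l : Fin 2) : depol lam (single k l 1) =
    (lam : ℂ) • single k l 1 + if k = l then (((1 - lam) / 2 : ℝ) : ℂ) • 1 else 0 := by
  split_ifs with h
  · subst h
    simp [depol, smul_smul, div_eq_mul_inv]
  · simp [depol, trace_single_eq_of_ne _ _ _ h]

/-- The diagonal part of the image of `schmidtProj σ` under `depol lam ⊗ depol lam` that remains
after `lam ^ 2` times the separable matrix of `schmidtProj_add_diagonal_mem_sepCone` is removed. -/
noncomputable def depolResidual (σ : Fin 2 → ℝ) (p : Fin 2 × Fin 2) : ℝ :=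
  lam * (1 - lam) / 2 * (σ p.1 ^ 2 + σ p.2 ^ 2) + (1 - lam) ^ 2 / 4 * (σ 0 ^ 2 + σ 1 ^ 2) -
    if p.1 = p.2 then 0 else lam ^ 2 * (σ 0 * σ 1)

lemma tensorMap_depol_schmidtProj (σ : Fin 2 → ℝ) :
    tensorMap (depol lam) (depol lam) (schmidtProj σ) =
      lam ^ 2 • (schmidtProj σ + diagonal fun p => if p.1 = p.2 then 0 else (σ 0 * σ 1 : ℂ)) +
        diagonal fun p => (depolResidual lam σ p : ℂ) := by
  rw [tensorMap_schmidtProj (isLinearMap_depol lam)]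
  ext ⟨p, p'⟩ ⟨q, q'⟩
  simp only [depol_single, Matrix.sum_apply, Fin.sum_univ_two, schmidtProj, vecMulVec_apply,
    Matrix.add_apply, Matrix.smul_apply, kroneckerMap_apply]
  fin_cases p <;> fin_cases p' <;> fin_cases q <;> fin_cases q' <;>
    simp [schmidtVec, depolResidual] <;> ring

lemma schmidtProj_add_diagonal_mem_sepCone {σ : Fin 2 → ℝ} (hσ : 0 ≤ σ) :
    schmidtProj σ +
      diagonal (fun p => if p.1 = p.2 then 0 else (σ 0 * σ 1 : ℂ)) ∈ sepCone (Fin 2) (Fin 2) := by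
  obtain ⟨r, rfl⟩ : ∃ r : Fin 2 → ℝ, σ = fun i => r i ^ 2 :=
    ⟨fun i => √(σ i), funext fun i => (Real.sq_sqrt (hσ i)).symm⟩
  let f (z : ℂ) (i : Fin 2) : ℂ := z ^ (i : ℕ) * r i
  let z : Fin 4 → ℂ := ![1, Complex.I, -1, -Complex.I]
  -- Averaging the product vectors `(r 0, z r 1) ⊗ (r 0, star z r 1)` over the fourth roots of unity
  -- kills every coherence except the one between `|00⟩` and `|11⟩`.
  have haverage : schmidtProj (fun i => r i ^ 2) +
      diagonal (fun p => if p.1 = p.2 then 0 else (((r 0 ^ 2 : ℝ) * (r 1 ^ 2 : ℝ) : ℂ))) =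
      (1 / 4 : ℝ) • ∑ k, vecMulVec (f (z k)) (star (f (z k))) ⊗ₖ
        vecMulVec (f (star (z k))) (star (f (star (z k)))) := by
    ext ⟨p, p'⟩ ⟨q, q'⟩
    fin_cases p <;> fin_cases p' <;> fin_cases q <;> fin_cases q' <;>
      simp [f, z, Fin.sum_univ_four, schmidtProj, vecMulVec_apply, schmidtVec] <;>
      ring_nf <;> simp only [Complex.I_sq, Complex.I_pow_four] <;> ring
  rw [haverage]
  exact (sepCone (Fin 2) (Fin 2)).smul_mem (by norm_num) (sum_mem fun k _ =>
    kronecker_mem_sepCone (posSemidef_vecMulVec_self_star _) (posSemidef_vecMulVec_self_star _))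

variable {lam}

lemma depolResidual_nonneg (hlam : -(1 / 3) ≤ lam) (hlam2 : lam ^ 2 ≤ 1 / 3) (σ : Fin 2 → ℝ) :
    0 ≤ depolResidual lam σ := by
  have hlam1 : 0 ≤ 1 - lam := by nlinarith
  have hlam3 : 0 ≤ 1 + 3 * lam := by linarith
  have hparallel (x y : ℝ) :
      0 ≤ lam * (1 - lam) / 2 * (x ^ 2 + x ^ 2) + (1 - lam) ^ 2 / 4 * (x ^ 2 + y ^ 2) :=
    calc 0 ≤ (1 - lam) * (1 + 3 * lam) / 4 * x ^ 2 + (1 - lam) ^ 2 / 4 * y ^ 2 := by positivity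
      _ = _ := by ring
  have hcrossed (x y : ℝ) : 0 ≤ lam * (1 - lam) / 2 * (x ^ 2 + y ^ 2) +
      (1 - lam) ^ 2 / 4 * (x ^ 2 + y ^ 2) - lam ^ 2 * (x * y) :=
    calc 0 ≤ (1 - 3 * lam ^ 2) / 4 * (x ^ 2 + y ^ 2) + lam ^ 2 / 2 * (x - y) ^ 2 :=
          add_nonneg (mul_nonneg (by linarith) (by positivity)) (by positivity)
      _ = _ := by ring
  rintro ⟨p, q⟩
  fin_cases p <;> fin_cases q
  · simpa [depolResidual] using hparallel (σ 0) (σ 1)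
  · simpa [depolResidual] using hcrossed (σ 0) (σ 1)
  · simpa [depolResidual, add_comm (σ 1 ^ 2) (σ 0 ^ 2)] using hcrossed (σ 0) (σ 1)
  · simpa [depolResidual, add_comm (σ 1 ^ 2) (σ 0 ^ 2)] using hparallel (σ 1) (σ 0)

lemma tensorMap_depol_schmidtProj_mem_sepCone (hlam : -(1 / 3) ≤ lam) (hlam2 : lam ^ 2 ≤ 1 / 3)
    {σ : Fin 2 → ℝ} (hσ : 0 ≤ σ) :
    tensorMap (depol lam) (depol lam) (schmidtProj σ) ∈ sepCone (Fin 2) (Fin 2) := by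
  rw [tensorMap_depol_schmidtProj]
  exact add_mem
    ((sepCone _ _).smul_mem (sq_nonneg lam) (schmidtProj_add_diagonal_mem_sepCone hσ))
    (diagonal_mem_sepCone (depolResidual_nonneg hlam hlam2 σ))

lemma is2LEA_depol (hlam : -(1 / 3) ≤ lam) (hlam2 : lam ^ 2 ≤ 1 / 3) : Is2LEA (depol lam) :=
  isEA_tensorMap_of_covariant (isLinearMap_depol lam) (trace_depol lam)
    (fun _ hU X => depol_conj_unitary lam hU X)
    fun _ hσ => tensorMap_depol_schmidtProj_mem_sepCone hlam hlam2 hσ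

end Depolarizing

section Channels

variable {ι : Type}

lemma isLinearMap_of_map_smul_add {E : Matrix ι ι ℂ → Matrix ι ι ℂ}
    (hE : ∀ (c : ℂ) X Y, E (c • X + Y) = c • E X + E Y) : IsLinearMap ℂ E := by
  have hzero : E 0 = 0 := by simpa using hE 1 0 0
  exact ⟨fun X Y => by simpa using hE 1 X Y, fun c X => by simpa [hzero] using hE c X 0⟩

variable [Fintype ι] {κ : Type*} [Fintype κ]

lemma tensorId_sum_conj (c : κ → ℝ) (U : κ → Matrix ι ι ℂ) {n : ℕ}
    (X : Matrix (ι × Fin n) (ι × Fin n) ℂ) :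
    tensorId (fun A => ∑ k, c k • (U k * A * (U k)ᴴ)) n X =
      ∑ k, c k • ((U k ⊗ₖ 1) * X * (U k ⊗ₖ 1)ᴴ) := by
  ext ⟨i, s⟩ ⟨j, t⟩
  simp [tensorId, mul_apply, Matrix.sum_apply, Fintype.sum_prod_type, one_apply,
    apply_ite (starRingEnd ℂ)]

variable [DecidableEq ι]

lemma isChannel_mixedUnitary {c : κ → ℝ} {U : κ → Matrix ι ι ℂ} (hc : 0 ≤ c)
    (hsum : ∑ k, c k = 1) (hU : ∀ k, U k ∈ unitaryGroup ι ℂ) :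
    IsChannel fun A => ∑ k, c k • (U k * A * (U k)ᴴ) := by
  refine ⟨fun z X Y => ?_, fun X => ?_, fun n X hX => ?_⟩
  · simp only [Matrix.mul_add, Matrix.add_mul, Matrix.mul_smul, Matrix.smul_mul, smul_add,
      Finset.sum_add_distrib, Finset.smul_sum, smul_comm z]
  · have htr (k : κ) : (U k * X * (U k)ᴴ).trace = X.trace := by
      rw [trace_mul_cycle, ← star_eq_conjTranspose, mem_unitaryGroup_iff'.mp (hU k),
        Matrix.one_mul]
    simp only [trace_sum, trace_smul, htr, ← Finset.sum_smul, hsum, one_smul]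
  · rw [tensorId_sum_conj]
    exact posSemidef_sum _ fun k _ => (hX.mul_mul_conjTranspose_same _).smul (hc k)

/-- The Pauli matrices, with the identity in position `0`. -/
def pauli : Fin 4 → Matrix (Fin 2) (Fin 2) ℂ :=
  ![1, !![0, 1; 1, 0], !![0, -Complex.I; Complex.I, 0], !![1, 0; 0, -1]]

lemma pauli_mem_unitaryGroup (k : Fin 4) : pauli k ∈ unitaryGroup (Fin 2) ℂ := by
  rw [mem_unitaryGroup_iff]
  fin_cases k <;> ext i j <;> fin_cases i <;> fin_cases j <;>
    simp [pauli, star_eq_conjTranspose, mul_apply, -cons_mul]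

lemma depol_eq_sum_conj_pauli (lam : ℝ) : depol lam = fun X =>
    ∑ k, (![(1 + 3 * lam) / 4, (1 - lam) / 4, (1 - lam) / 4, (1 - lam) / 4] : Fin 4 → ℝ) k •
      (pauli k * X * (pauli k)ᴴ) := by
  funext X
  ext i j
  fin_cases i <;> fin_cases j <;>
    simp [depol, pauli, Fin.sum_univ_four, mul_apply, trace, -cons_mul] <;>
    ring_nf <;> simp <;> ring

lemma isChannel_depol {lam : ℝ} (hlam : -(1 / 3) ≤ lam) (hlam1 : lam ≤ 1) :
    IsChannel (depol lam) := by
  rw [depol_eq_sum_conj_pauli]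
  refine isChannel_mixedUnitary (fun k => ?_) ?_ pauli_mem_unitaryGroup
  · fin_cases k <;> simp <;> linarith
  · simp [Fin.sum_univ_four]
    ring

end Channels

section PartialTranspose

lemma isLinearMap_pt1 : IsLinearMap ℂ pt1 where
  map_add _ _ := rfl
  map_smul _ _ := rfl

lemma pt1_kronecker (A : Matrix (Fin 2) (Fin 2) ℂ) (B : Matrix (Fin 2 × Fin 2) (Fin 2 × Fin 2) ℂ) :
    pt1 (A ⊗ₖ B) = Aᵀ ⊗ₖ B :=
  rfl

variable {ω : Matrix (Fin 2 × Fin 2 × Fin 2) (Fin 2 × Fin 2 × Fin 2) ℂ}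

lemma posSemidef_pt1_of_isSep (hω : IsSep ω) : (pt1 ω).PosSemidef := by
  obtain ⟨m, p, ξ, ζ, hp, -, hξ, hζ, rfl⟩ := hω
  rw [← isLinearMap_pt1.mk'_apply]
  simp only [map_sum, map_smul]
  simp only [IsLinearMap.mk'_apply, pt1_kronecker]
  exact posSemidef_sum _ fun j _ => ((hξ j).1.transpose.kronecker (hζ j).1).smul
    (Complex.zero_le_real.mpr (hp j))

lemma not_isSep_of_pt1_mulVec_eq_smul {μ : ℝ} (hμ : μ < 0) {v : Fin 2 × Fin 2 × Fin 2 → ℂ}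
    (hv : v ≠ 0) (heig : pt1 ω *ᵥ v = (μ : ℂ) • v) : ¬ IsSep ω := fun hω => by
  have hnonneg : 0 ≤ (μ : ℂ) * (star v ⬝ᵥ v) := by
    simpa only [heig, dotProduct_smul, smul_eq_mul] using
      (posSemidef_pt1_of_isSep hω).dotProduct_mulVec_nonneg v
  exact hnonneg.not_gt
    (mul_neg_of_neg_of_pos (by exact_mod_cast hμ) (dotProduct_star_self_pos_iff.mpr hv))

lemma isSep_of_isFullySep3 (hω : IsFullySep3 ω) : IsSep ω := by
  obtain ⟨m, p, a, b, c, hp, hsum, habc, rfl⟩ := hω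
  exact ⟨m, p, a, fun j => b j ⊗ₖ c j, hp, hsum, fun j => (habc j).1,
    fun j => isState_kronecker (habc j).2.1 (habc j).2.2, rfl⟩

end PartialTranspose

section GHZ

lemma ghzState_eq_sum : ghzState = ∑ k : Fin 2, ∑ l : Fin 2, (1 / 2 : ℂ) •
    (single k l (1 : ℂ) ⊗ₖ (single k l (1 : ℂ) ⊗ₖ single k l (1 : ℂ))) := by
  have hsqrt : ((√2 : ℝ) : ℂ)⁻¹ * ((√2 : ℝ) : ℂ)⁻¹ = 2⁻¹ := by
    rw [← mul_inv, ← Complex.ofReal_mul, Real.mul_self_sqrt zero_le_two, Complex.ofReal_ofNat]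
  ext ⟨i, j, k⟩ ⟨i', j', k'⟩
  simp only [ghzState, vecMulVec_apply, Pi.star_apply, Fin.sum_univ_two, Matrix.add_apply,
    Matrix.smul_apply, kroneckerMap_apply, single_apply, smul_eq_mul]
  fin_cases i <;> fin_cases j <;> fin_cases k <;> fin_cases i' <;> fin_cases j' <;>
    fin_cases k' <;> simp [ghzVec, hsqrt]

lemma isState_ghzState : IsState ghzState := by
  refine ⟨posSemidef_vecMulVec_self_star _, ?_⟩
  rw [ghzState_eq_sum]
  simp only [trace_sum, trace_smul, trace_kronecker]
  norm_num [trace_single_eq_of_ne]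

lemma tensorMap_ghzState {E : Matrix (Fin 2) (Fin 2) ℂ → Matrix (Fin 2) (Fin 2) ℂ}
    (hE : IsLinearMap ℂ E) : tensorMap E (tensorMap E E) ghzState =
      ∑ k, ∑ l, (1 / 2 : ℂ) • (E (single k l 1) ⊗ₖ (E (single k l 1) ⊗ₖ E (single k l 1))) := by
  have hEE := isLinearMap_tensorMap hE hE
  have hEEE := isLinearMap_tensorMap hE hEE
  rw [ghzState_eq_sum, ← hEEE.mk'_apply]
  simp only [map_sum, map_smul]
  simp only [hEEE.mk'_apply, tensorMap_kronecker hE hEE, tensorMap_kronecker hE hE]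

/-- The vector `|100⟩ - |011⟩`, which detects the entanglement of a depolarized GHZ state. -/
def ghzEigenvec : Fin 2 × Fin 2 × Fin 2 → ℂ :=
  Pi.single (1, 0, 0) 1 - Pi.single (0, 1, 1) 1

lemma ghzEigenvec_ne_zero : ghzEigenvec ≠ 0 := fun h => by
  simpa [ghzEigenvec] using congrFun h (1, 0, 0)

lemma pt1_tensorMap_depol_ghzState_mulVec (lam : ℝ) :
    pt1 (tensorMap (depol lam) (tensorMap (depol lam) (depol lam)) ghzState) *ᵥ ghzEigenvec =
      ((((1 - lam ^ 2) / 4 - lam ^ 3) / 2 : ℝ) : ℂ) • ghzEigenvec := by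
  rw [tensorMap_ghzState (isLinearMap_depol lam), ghzEigenvec, mulVec_sub, mulVec_single_one,
    mulVec_single_one]
  ext ⟨i, j, k⟩
  simp only [pt1, depol_single, Fin.sum_univ_two]
  fin_cases i <;> fin_cases j <;> fin_cases k <;> simp <;> ring

lemma not_isSep_tensorMap_depol_ghzState {lam : ℝ} (hlam : (1 - lam ^ 2) / 4 < lam ^ 3) :
    ¬ IsSep (tensorMap (depol lam) (tensorMap (depol lam) (depol lam)) ghzState) :=
  not_isSep_of_pt1_mulVec_eq_smul (by linarith) ghzEigenvec_ne_zero
    (pt1_tensorMap_depol_ghzState_mulVec lam)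

lemma not_is3LEA_depol {lam : ℝ} (hlam : (1 - lam ^ 2) / 4 < lam ^ 3) : ¬ Is3LEA (depol lam) :=
  fun h => not_isSep_tensorMap_depol_ghzState hlam
    (isSep_of_isFullySep3 (h ghzState isState_ghzState))

end GHZ

section PartialTrace

lemma isSep_traceRight_of_isFullySep3
    {X : Matrix ((Fin 2 × Fin 2) × Fin 2) ((Fin 2 × Fin 2) × Fin 2) ℂ}
    (hX : IsFullySep3 (reindex (.prodAssoc _ _ _) (.prodAssoc _ _ _) X)) :
    IsSep (traceRight X) := by
  obtain ⟨m, p, a, b, c, hp, hsum, habc, hdecomp⟩ := hX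
  refine ⟨m, p, a, b, hp, hsum, fun j => (habc j).1, fun j => (habc j).2.1, ?_⟩
  have hXsum : X = ∑ j, (p j : ℂ) • ((a j ⊗ₖ b j) ⊗ₖ c j) := by
    apply (reindex (.prodAssoc _ _ _) (.prodAssoc _ _ _)).injective
    rw [hdecomp]
    ext
    simp [Matrix.sum_apply, mul_assoc]
  rw [hXsum, ← isLinearMap_traceRight.mk'_apply]
  simp only [map_sum, map_smul]
  simp only [IsLinearMap.mk'_apply, traceRight_kronecker, (habc _).2.2.2, one_smul]

lemma is2LEA_of_is3LEA {E : Matrix (Fin 2) (Fin 2) ℂ → Matrix (Fin 2) (Fin 2) ℂ}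
    (hE : IsLinearMap ℂ E) (htr : ∀ A, (E A).trace = A.trace) (h : Is3LEA E) : Is2LEA E := by
  intro ω hω
  let ζ : Matrix (Fin 2) (Fin 2) ℂ := single 0 0 1
  have hζ : IsState ζ := ⟨posSemidef_single_self 0, trace_single_eq_same 0 1⟩
  have hsep := h _ (isState_reindex (.prodAssoc _ _ _) (isState_kronecker hω hζ))
  rw [tensorMap_reindex_prodAssoc, tensorMap_kronecker (isLinearMap_tensorMap hE hE) hE] at hsep
  simpa only [traceRight_kronecker, htr, hζ.2, one_smul] using isSep_traceRight_of_isFullySep3 hsep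

end PartialTrace

section InvSqrtThree

lemma inv_sqrt_three_sq : (√3 : ℝ)⁻¹ ^ 2 = 1 / 3 := by
  rw [inv_pow, Real.sq_sqrt zero_le_three, one_div]

lemma neg_one_third_le_inv_sqrt_three : -(1 / 3) ≤ (√3 : ℝ)⁻¹ :=
  le_trans (by norm_num) (inv_nonneg.mpr (Real.sqrt_nonneg 3))

lemma one_sub_sq_inv_sqrt_three_lt : (1 - (√3 : ℝ)⁻¹ ^ 2) / 4 < (√3 : ℝ)⁻¹ ^ 3 := by
  have hhalf : 1 / 2 < (√3 : ℝ)⁻¹ := by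
    nlinarith [inv_sqrt_three_sq, inv_nonneg.mpr (Real.sqrt_nonneg 3)]
  rw [pow_succ _ 2, inv_sqrt_three_sq]
  linarith

end InvSqrtThree

theorem stmt_16_general :
    (∀ lam : ℝ, ∃ v : Fin 2 × Fin 2 × Fin 2 → ℂ, v ≠ 0 ∧
      pt1 (tensorMap (depol lam) (tensorMap (depol lam) (depol lam)) ghzState) *ᵥ v =
        ((((1 - lam ^ 2) / 4 - lam ^ 3) / 2 : ℝ) : ℂ) • v) ∧
    (∀ lam : ℝ, (1 - lam ^ 2) / 4 < lam ^ 3 →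
      ((1 - lam ^ 2) / 4 - lam ^ 3) / 2 < 0 ∧
      ¬ IsSep (tensorMap (depol lam) (tensorMap (depol lam) (depol lam)) ghzState) ∧
      ¬ IsFullySep3 (tensorMap (depol lam) (tensorMap (depol lam) (depol lam)) ghzState) ∧
      ¬ Is3LEA (depol lam)) ∧
    (∀ lam : ℝ, -(1 / 3) ≤ lam → lam ^ 2 ≤ 1 / 3 → IsChannel (depol lam) ∧ Is2LEA (depol lam)) ∧
    {E : Matrix (Fin 2) (Fin 2) ℂ → Matrix (Fin 2) (Fin 2) ℂ | IsChannel E ∧ Is3LEA E} ⊂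
      {E : Matrix (Fin 2) (Fin 2) ℂ → Matrix (Fin 2) (Fin 2) ℂ | IsChannel E ∧ Is2LEA E} := by
  have h2LEA (lam : ℝ) (hlam : -(1 / 3) ≤ lam) (hlam2 : lam ^ 2 ≤ 1 / 3) :
      IsChannel (depol lam) ∧ Is2LEA (depol lam) :=
    ⟨isChannel_depol hlam (by nlinarith), is2LEA_depol hlam hlam2⟩
  refine ⟨fun lam => ⟨_, ghzEigenvec_ne_zero, pt1_tensorMap_depol_ghzState_mulVec lam⟩,
    fun lam hlam => ⟨by linarith, not_isSep_tensorMap_depol_ghzState hlam,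
      fun h => not_isSep_tensorMap_depol_ghzState hlam (isSep_of_isFullySep3 h),
      not_is3LEA_depol hlam⟩, h2LEA, ?_⟩
  refine ssubset_of_subset_not_subset (fun E ⟨hE, h3⟩ => ⟨hE, is2LEA_of_is3LEA
    (isLinearMap_of_map_smul_add hE.1) hE.2.1 h3⟩) fun hsub => ?_
  exact not_is3LEA_depol one_sub_sq_inv_sqrt_three_lt
    (hsub (h2LEA (√3)⁻¹ neg_one_third_le_inv_sqrt_three inv_sqrt_three_sq.le)).2

/-- the partial transpose of `E_λ^{⊗3}[|GHZ⟩⟨GHZ|]` across the `1|23`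
cut has eigenvalue `μ₋ = ((1-λ²)/4 - λ³)/2`, which is negative whenever
`(1-λ²)/4 < λ³`; in particular for `λ = 1/√3`, so that `E_{1/√3}^{⊗3}[|GHZ⟩⟨GHZ|]` is
entangled across the `1|23` cut and not fully separable. Consequently `E_{1/√3}` is
2-LEA but not 3-LEA, i.e. `T_{3-LEA} ⊊ T_{2-LEA}`. -/
theorem stmt_16 :
    (∀ lam : ℝ, 0 ≤ lam → lam ≤ 1 →
      ∃ v : (Fin 2 × Fin 2 × Fin 2) → ℂ, v ≠ 0 ∧
        (pt1 (tensorMap (depol lam) (tensorMap (depol lam) (depol lam)) ghzState)).mulVec v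
          = ((((1 - lam ^ 2) / 4 - lam ^ 3) / 2 : ℝ) : ℂ) • v) ∧
    (∀ lam : ℝ, (1 - lam ^ 2) / 4 < lam ^ 3 → (((1 - lam ^ 2) / 4 - lam ^ 3) / 2 : ℝ) < 0) ∧
    ((((1 - ((Real.sqrt 3)⁻¹) ^ 2) / 4 - ((Real.sqrt 3)⁻¹) ^ 3) / 2 : ℝ) < 0) ∧
    ¬ IsSep (tensorMap (depol (Real.sqrt 3)⁻¹)
      (tensorMap (depol (Real.sqrt 3)⁻¹) (depol (Real.sqrt 3)⁻¹)) ghzState) ∧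
    ¬ IsFullySep3 (tensorMap (depol (Real.sqrt 3)⁻¹)
      (tensorMap (depol (Real.sqrt 3)⁻¹) (depol (Real.sqrt 3)⁻¹)) ghzState) ∧
    Is2LEA (depol (Real.sqrt 3)⁻¹) ∧
    ¬ Is3LEA (depol (Real.sqrt 3)⁻¹) ∧
    {E : Matrix (Fin 2) (Fin 2) ℂ → Matrix (Fin 2) (Fin 2) ℂ | IsChannel E ∧ Is3LEA E}
      ⊂ {E : Matrix (Fin 2) (Fin 2) ℂ → Matrix (Fin 2) (Fin 2) ℂ | IsChannel E ∧ Is2LEA E}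
    := by
  obtain ⟨heigen, hneg, h2LEA, hssubset⟩ := stmt_16_general
  obtain ⟨hneg3, hsep, hfull, h3LEA⟩ := hneg (√3)⁻¹ one_sub_sq_inv_sqrt_three_lt
  exact ⟨fun lam _ _ => heigen lam, fun lam hlam => (hneg lam hlam).1, hneg3, hsep, hfull,
    (h2LEA (√3)⁻¹ neg_one_third_le_inv_sqrt_three inv_sqrt_three_sq.le).2, h3LEA, hssubset⟩
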